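/- Let k ≥ 1 with n_k = 2. Then for every L with |p_{k−1}| + 2 ≤ L ≤ |p_k| + 1, the complexity is C(L) = (#A_{k+1} − 1)·L + (#A_{k−1} − #A_{k+1})·(|p_{k−1}| + 1) + 𝟙_{A_k}(a_{k−1})·T(L), where T(L) = L − |p_{k−1}| + |p_{k−2}| if |p_{k−1}| + 2 ≤ L ≤ |p_k| − |p_{k−2}|, and T(L) = |p_{k−1}| + 1 if |p_k| − |p_{k−2}| + 1 ≤ L ≤ |p_k| + 1. -/

import Mathlib

/-!
Put `m = |p (k-1)| + 1` and `e = |p (k-2)| + 1`, so `m + 1 ≤ L ≤ 2 m`. All blocks are prefixes of one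
infinite word `toepWord`, whose letter at position `i ≥ 1` is `a l` for the least `l` such that
`n 0 ⋯ n l` does not divide `i`; the language consists of its factors. Away from multiples of `m`
this word repeats `p (k-1)`, and because `n k = 2` the letters at consecutive multiples of `m` are
alternately `a k` and an arbitrary letter of `A (k+1)`. Hence (`window_lang_iff`) a factor of length
`L` is the factor at some offset `s < m` of `p (k-1) c p (k-1) d p (k-1)`, where one of `c`, `d` is
`a k` and the other lies in `A (k+1)`. The letter `c` is always visible, `d` exactly when
`s ≥ 2 m - L`.

It remains to see when two triples `(s, c, d)` give the same factor. For equal offsets the visible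
letters agree. In general, the offsets are congruent modulo `e` (`offset_modEq`), since at each lower
level a letter `a (j+1)` would otherwise face `a j`. If they are different, every visible hole faces
the letter `a (k-1)` (`holes_of_ne`); as `a k ≠ a (k-1)`, only one hole is visible and
`c = a (k-1)`. Conversely `p (k-1) a (k-1) p (k-1)` has period `e`. So, if `a (k-1) ∈ A k`, the
`2 m - L` offsets with `c = a (k-1)` and one visible hole yield only `min (2 m - L) e` different
factors, and all other triples yield different factors. Counting them gives the formula.
-/

open Filter

/-- The blocks `p k` of the simple Toeplitz subshift coded by `a` and `n`:
`p 0 = a 0 ^ (n 0 - 1)` and `p (k+1)` consists of `n (k+1)` copies of `p k`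
separated by `n (k+1) - 1` single letters `a (k+1)`. -/
def ToeplitzBlock {A : Type*} (a : ℕ → A) (n : ℕ → ℕ) : ℕ → List A
  | 0 => List.replicate (n 0 - 1) (a 0)
  | k + 1 => List.intercalate [a (k + 1)] (List.replicate (n (k + 1)) (ToeplitzBlock a n k))

/-- `lenPrev a n k = |p (k-1)|`, with the convention `|p (-1)| = 0`. -/
def lenPrev {A : Type*} (a : ℕ → A) (n : ℕ → ℕ) : ℕ → ℕ
  | 0 => 0
  | k + 1 => (ToeplitzBlock a n k).length

/-- The language of the simple Toeplitz subshift: all finite words occurring as a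
factor of some block `p k`. -/
def ToeplitzLang {A : Type*} (a : ℕ → A) (n : ℕ → ℕ) : Set (List A) :=
  {u | ∃ k, u <:+: ToeplitzBlock a n k}

/-- The complexity function `C L`. -/
noncomputable def cmpl {A : Type*} (a : ℕ → A) (n : ℕ → ℕ) (L : ℕ) : ℕ :=
  Set.ncard {u | u ∈ ToeplitzLang a n ∧ u.length = L}

/-- The palindrome complexity function `P L`. -/
noncomputable def palCmpl {A : Type*} (a : ℕ → A) (n : ℕ → ℕ) (L : ℕ) : ℕ :=
  Set.ncard {u | u ∈ ToeplitzLang a n ∧ u.length = L ∧ u.reverse = u}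

/-- `Ak a k = {a j : j ≥ k}`. -/
def Ak {A : Type*} (a : ℕ → A) (k : ℕ) : Set A := {x | ∃ j, k ≤ j ∧ a j = x}

/-- The eventual alphabet `A_ev = ⋂ k, A_k`. -/
def Aev {A : Type*} (a : ℕ → A) : Set A := ⋂ k, Ak a k

/-- `Kf a k = min {j > k : {a (k+1), …, a j} = A (k+1)}`. -/
noncomputable def Kf {A : Type*} (a : ℕ → A) (k : ℕ) : ℕ :=
  sInf {j | k < j ∧ {x | ∃ i, k + 1 ≤ i ∧ i ≤ j ∧ a i = x} = Ak a (k + 1)}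

/-- The positions `m i` at which `Kf` increases: `m 0 = 0` and
`m (i+1) = min {j > m i : Kf j > Kf (m i)}`. -/
noncomputable def mseq {A : Type*} (a : ℕ → A) : ℕ → ℕ
  | 0 => 0
  | i + 1 => sInf {j | mseq a i < j ∧ Kf a (mseq a i) < Kf a j}

/-- The repetitivity function `R L`: the least `L'` such that every word of
length `L` of the language is a factor of every word of length `L'`. -/
noncomputable def repet {A : Type*} (a : ℕ → A) (n : ℕ → ℕ) (L : ℕ) : ℕ :=
  sInf {L' | ∀ u ∈ ToeplitzLang a n, u.length = L →
    ∀ w ∈ ToeplitzLang a n, w.length = L' → u <:+: w}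

/-- `blockPeriod n j = n 0 * ⋯ * n (j-1)`, i.e. `|p (j-1)| + 1`, including the value `1` at `j = 0`. -/
def blockPeriod (n : ℕ → ℕ) (j : ℕ) : ℕ := ∏ i ∈ Finset.range j, n i

/-- The index of the letter at position `i` of the one-sided Toeplitz word: the least `l` such that
`n 0 * ⋯ * n l` does not divide `i`. Positions start at `1`; the value at `0` is irrelevant. -/
noncomputable def toepLevel (n : ℕ → ℕ) (i : ℕ) : ℕ := sInf {l | ¬ blockPeriod n (l + 1) ∣ i}

/-- The one-sided Toeplitz word (positions `1, 2, …`) having every block `p k` as a prefix. -/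
noncomputable def toepWord {A : Type*} (a : ℕ → A) (n : ℕ → ℕ) (i : ℕ) : A := a (toepLevel n i)

/-- The factor of length `L` of the sequence `f` starting at position `i`. -/
def window {A : Type*} (f : ℕ → A) (i L : ℕ) : List A := (List.range L).map fun t => f (i + t)

/-- The Toeplitz word with its letters at multiples of `m` replaced: by `c` at `m` itself and by
`d` at all other multiples. For `m = |p k'| + 1` the positions `1, …, 3m-1` carry
`p k' c p k' d p k'`. -/
noncomputable def holeWord {A : Type*} (a : ℕ → A) (n : ℕ → ℕ) (m : ℕ) (c d : A) (i : ℕ) : A :=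
  if m ∣ i then (if i = m then c else d) else toepWord a n i

/-! ### The Toeplitz word -/

theorem blockPeriod_succ (n : ℕ → ℕ) (j : ℕ) :
    blockPeriod n (j + 1) = blockPeriod n j * n j := Finset.prod_range_succ _ _

theorem blockPeriod_dvd (n : ℕ → ℕ) {i j : ℕ} (h : i ≤ j) : blockPeriod n i ∣ blockPeriod n j :=
  Finset.prod_dvd_prod_of_subset _ _ _ (Finset.range_subset_range.2 h)

theorem blockPeriod_pos {n : ℕ → ℕ} (hn : ∀ k, 2 ≤ n k) (j : ℕ) : 0 < blockPeriod n j :=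
  Finset.prod_pos fun i _ => by have := hn i; omega

theorem two_mul_blockPeriod_le {n : ℕ → ℕ} (hn : ∀ k, 2 ≤ n k) (j : ℕ) :
    2 * blockPeriod n j ≤ blockPeriod n (j + 1) := by
  rw [blockPeriod_succ, mul_comm]
  exact Nat.mul_le_mul_left _ (hn j)

theorem lt_blockPeriod {n : ℕ → ℕ} (hn : ∀ k, 2 ≤ n k) (j : ℕ) : j < blockPeriod n j := by
  induction j with
  | zero => exact blockPeriod_pos hn 0
  | succ j ih => have := two_mul_blockPeriod_le hn j; omega

theorem toepWord_eq {A : Type*} (a : ℕ → A) (n : ℕ → ℕ) {l i : ℕ}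
    (h1 : blockPeriod n l ∣ i) (h2 : ¬ blockPeriod n (l + 1) ∣ i) : toepWord a n i = a l := by
  unfold toepWord toepLevel
  congr 1
  apply le_antisymm
  · exact Nat.sInf_le h2
  · refine le_csInf ⟨l, h2⟩ fun b hb => ?_
    by_contra hlt
    exact hb ((blockPeriod_dvd n (by omega)).trans h1)

theorem exists_level {n : ℕ → ℕ} (hn : ∀ k, 2 ≤ n k) {i j : ℕ} (hi : 0 < i)
    (hj : blockPeriod n j ∣ i) :
    ∃ l, j ≤ l ∧ blockPeriod n l ∣ i ∧ ¬ blockPeriod n (l + 1) ∣ i := by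
  by_contra hcon
  push Not at hcon
  have key : ∀ t, blockPeriod n (j + t) ∣ i := by
    intro t
    induction t with
    | zero => simpa using hj
    | succ t ih => exact hcon (j + t) (by omega) ih
  have h1 := Nat.le_of_dvd hi (key i)
  have h2 := lt_blockPeriod hn (j + i)
  omega

/-- Away from multiples of `blockPeriod n j` the Toeplitz word has period `blockPeriod n j`. -/
theorem toepWord_congr {A : Type*} (a : ℕ → A) {n : ℕ → ℕ} (hn : ∀ k, 2 ≤ n k) {j i i' : ℕ}
    (hi : ¬ blockPeriod n j ∣ i) (h : i ≡ i' [MOD blockPeriod n j]) :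
    toepWord a n i = toepWord a n i' := by
  have hi0 : 0 < i := Nat.pos_of_ne_zero (by rintro rfl; simp at hi)
  obtain ⟨l, -, h1, h2⟩ := exists_level hn hi0 (j := 0) (by simp [blockPeriod])
  have hlj : l + 1 ≤ j := by
    by_contra hlt
    exact hi ((blockPeriod_dvd n (by omega)).trans h1)
  rw [toepWord_eq a n h1 h2]
  symm
  apply toepWord_eq
  · exact ((h.of_dvd (blockPeriod_dvd n (by omega))).dvd_iff dvd_rfl).1 h1
  · intro h3
    exact h2 (((h.of_dvd (blockPeriod_dvd n hlj)).dvd_iff dvd_rfl).2 h3)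

theorem window_eq_iff {A : Type*} {f g : ℕ → A} {i i' L : ℕ} :
    window f i L = window g i' L ↔ ∀ t < L, f (i + t) = g (i' + t) := by
  simp [window, List.map_inj_left]

theorem window_add {A : Type*} (f : ℕ → A) (i L L' : ℕ) :
    window f i (L + L') = window f i L ++ window f (i + L) L' := by
  simp [window, List.range_add, Function.comp_def, add_assoc]

theorem toeplitzBlock_eq {A : Type*} (a : ℕ → A) {n : ℕ → ℕ} (hn : ∀ k, 2 ≤ n k) (j : ℕ) :
    ToeplitzBlock a n j = window (toepWord a n) 1 (blockPeriod n (j + 1) - 1) := by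
  induction j with
  | zero =>
    have h0 : blockPeriod n 1 = n 0 := by simp [blockPeriod]
    rw [ToeplitzBlock, h0, window]
    symm
    rw [List.eq_replicate_iff]
    refine ⟨by simp, fun b hb => ?_⟩
    simp only [List.mem_map, List.mem_range] at hb
    obtain ⟨t, ht, rfl⟩ := hb
    apply toepWord_eq
    · simp [blockPeriod]
    · rw [h0]
      intro h
      have := Nat.le_of_dvd (by omega) h
      omega
  | succ j ih =>
    set M := blockPeriod n (j + 1) with hM
    have hMpos : 0 < M := blockPeriod_pos hn _
    have hp : ∀ y, ToeplitzBlock a n j = window (toepWord a n) (y * M + 1) (M - 1) := by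
      intro y
      rw [ih, window_eq_iff]
      intro t ht
      apply toepWord_congr a hn (j := j + 1)
      · intro h
        have := Nat.le_of_dvd (by omega) h
        omega
      · have : y * M + 1 + t = 1 + t + M * y := by ring
        rw [this]
        exact (Nat.ModEq.symm (by simp [Nat.ModEq, ← hM]))
    -- A run of copies of `p j` can be read off from any multiple of `M` on,
    -- as long as it does not pass the end of `p (j+1)`.
    have key : ∀ t y, y + (t + 1) ≤ n (j + 1) →
        List.intercalate [a (j + 1)] (List.replicate (t + 1) (ToeplitzBlock a n j)) =
          window (toepWord a n) (y * M + 1) ((t + 1) * M - 1) := by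
      intro t
      induction t with
      | zero =>
        intro y _
        simpa [List.intercalate] using hp y
      | succ t iht =>
        intro y hy
        have h1 : List.intercalate [a (j + 1)] (List.replicate (t + 1 + 1) (ToeplitzBlock a n j))
            = ToeplitzBlock a n j ++ ([a (j + 1)] ++
              List.intercalate [a (j + 1)] (List.replicate (t + 1) (ToeplitzBlock a n j))) := by
          simp [List.replicate_succ, List.intercalate_cons_cons]
        have h2 : (t + 1 + 1) * M - 1 = (M - 1) + (1 + ((t + 1) * M - 1)) := by
          have : (t + 1 + 1) * M = (t + 1) * M + M := by ring
          have : (t + 1) * M = t * M + M := by ring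
          omega
        have h3 : y * M + 1 + (M - 1) = (y + 1) * M := by
          have : (y + 1) * M = y * M + M := by ring
          omega
        rw [h1, h2, window_add, window_add, ← hp y, h3, iht (y + 1) (by omega)]
        congr 2
        have : toepWord a n ((y + 1) * M) = a (j + 1) := by
          apply toepWord_eq
          · exact Dvd.intro_left _ rfl
          · rw [blockPeriod_succ, ← hM, mul_comm (y + 1), Nat.mul_dvd_mul_iff_left hMpos]
            intro h
            have := Nat.le_of_dvd (by omega) h
            omega
        simp [window, this]
    have h2 := hn (j + 1)
    obtain ⟨t, ht⟩ : ∃ t, n (j + 1) = t + 1 := ⟨n (j + 1) - 1, by omega⟩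
    rw [ToeplitzBlock, blockPeriod_succ, ← hM, ht, key t 0 (by omega), zero_mul, zero_add, mul_comm]

theorem toeplitzBlock_length {A : Type*} (a : ℕ → A) {n : ℕ → ℕ} (hn : ∀ k, 2 ≤ n k) (j : ℕ) :
    (ToeplitzBlock a n j).length + 1 = blockPeriod n (j + 1) := by
  have := blockPeriod_pos hn (j + 1)
  rw [toeplitzBlock_eq a hn, window]
  simp only [List.length_map, List.length_range]
  omega

theorem lenPrev_add_one {A : Type*} (a : ℕ → A) {n : ℕ → ℕ} (hn : ∀ k, 2 ≤ n k) (j : ℕ) :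
    lenPrev a n j + 1 = blockPeriod n j := by
  cases j with
  | zero => simp [lenPrev, blockPeriod]
  | succ j => exact toeplitzBlock_length a hn j

theorem mem_lang_iff {A : Type*} (a : ℕ → A) {n : ℕ → ℕ} (hn : ∀ k, 2 ≤ n k) (L : ℕ) (u : List A) :
    (u ∈ ToeplitzLang a n ∧ u.length = L) ↔ ∃ i, 1 ≤ i ∧ u = window (toepWord a n) i L := by
  constructor
  · rintro ⟨⟨j, s, t, h⟩, rfl⟩
    rw [toeplitzBlock_eq a hn] at h
    have hlen := congrArg List.length h
    simp only [List.length_append, window, List.length_map, List.length_range] at hlen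
    rw [← hlen, window_add, window_add] at h
    have h1 := (List.append_inj h (by simp [window])).1
    exact ⟨1 + s.length, by omega, (List.append_inj h1 (by simp [window])).2⟩
  · rintro ⟨i, hi, rfl⟩
    refine ⟨⟨i + L, ?_⟩, by simp [window]⟩
    have h1 := lt_blockPeriod hn (i + L + 1)
    obtain ⟨r, hr⟩ : ∃ r, blockPeriod n (i + L + 1) - 1 = (i - 1) + L + r :=
      ⟨blockPeriod n (i + L + 1) - 1 - (i - 1) - L, by omega⟩
    rw [toeplitzBlock_eq a hn, hr, window_add, window_add, show 1 + (i - 1) = i by omega]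
    exact ⟨_, _, rfl⟩

/-! ### Factors of length between `m + 1` and `2 m`, with `m = |p k'| + 1` -/

/-- The letters `c`, `d` filling consecutive holes of the `p k'`-skeleton: since `n (k'+1) = 2`, one
of them is `a (k'+1)` and the other one is any letter of `A (k'+2)`. -/
def HolePair {A : Type*} (a : ℕ → A) (k' : ℕ) (c d : A) : Prop :=
  (c = a (k' + 1) ∧ d ∈ Ak a (k' + 2)) ∨ (c ∈ Ak a (k' + 2) ∧ d = a (k' + 1))

theorem window_toepWord_eq_holeWord {A : Type*} (a : ℕ → A) {n : ℕ → ℕ} (hn : ∀ k, 2 ≤ n k)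
    {k' y s L : ℕ} (hs : s < blockPeriod n (k' + 1)) (hL : L ≤ 2 * blockPeriod n (k' + 1)) :
    window (toepWord a n) (y * blockPeriod n (k' + 1) + s + 1) L =
      window (holeWord a n (blockPeriod n (k' + 1))
        (toepWord a n ((y + 1) * blockPeriod n (k' + 1)))
        (toepWord a n ((y + 2) * blockPeriod n (k' + 1)))) (s + 1) L := by
  set m := blockPeriod n (k' + 1) with hm
  have hmpos : 0 < m := blockPeriod_pos hn _
  rw [window_eq_iff]
  intro t ht
  unfold holeWord
  have heq : y * m + s + 1 + t = y * m + (s + 1 + t) := by ring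
  split_ifs with h1 h2
  · rw [heq, h2]; congr 1; ring
  · obtain ⟨z, hz⟩ := h1
    have hz2 : z = 2 := by
      have hz3 : z < 3 := by
        by_contra hcon
        have := Nat.mul_le_mul_left m (show 3 ≤ z by omega)
        omega
      have : z ≠ 0 := by rintro rfl; omega
      have : z ≠ 1 := by rintro rfl; omega
      omega
    rw [heq, hz, hz2]; congr 1; ring
  · symm
    apply toepWord_congr a hn (j := k' + 1) h1
    rw [heq]
    simp [Nat.ModEq, ← hm]

theorem toepWord_mem_Ak {A : Type*} (a : ℕ → A) {n : ℕ → ℕ} (hn : ∀ k, 2 ≤ n k) {j i : ℕ}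
    (hi : 0 < i) (h : blockPeriod n j ∣ i) : toepWord a n i ∈ Ak a j := by
  obtain ⟨l, hl, h1, h2⟩ := exists_level hn hi h
  exact ⟨l, hl, (toepWord_eq a n h1 h2).symm⟩

theorem window_lang_iff {A : Type*} (a : ℕ → A) {n : ℕ → ℕ} (hn : ∀ k, 2 ≤ n k)
    {k' L : ℕ} (hnk : n (k' + 1) = 2) (hL : L ≤ 2 * blockPeriod n (k' + 1)) (u : List A) :
    (u ∈ ToeplitzLang a n ∧ u.length = L) ↔ ∃ s c d, s < blockPeriod n (k' + 1) ∧
      HolePair a k' c d ∧ u = window (holeWord a n (blockPeriod n (k' + 1)) c d) (s + 1) L := by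
  rw [mem_lang_iff a hn]
  set m := blockPeriod n (k' + 1) with hm
  have hmpos : 0 < m := blockPeriod_pos hn _
  have h2m : blockPeriod n (k' + 2) = m * 2 := by rw [blockPeriod_succ, hnk]
  have hodd : ∀ y, toepWord a n ((2 * y + 1) * m) = a (k' + 1) := by
    intro y
    apply toepWord_eq
    · exact Dvd.intro_left _ rfl
    · rw [h2m, mul_comm (2 * y + 1), Nat.mul_dvd_mul_iff_left hmpos]; omega
  have heven : ∀ y, 0 < y → toepWord a n ((2 * y) * m) ∈ Ak a (k' + 2) := by
    intro y hy
    apply toepWord_mem_Ak a hn (by positivity)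
    rw [h2m]; exact ⟨y, by ring⟩
  have hreal : ∀ x ∈ Ak a (k' + 2), ∃ y, toepWord a n ((2 * (y + 1)) * m) = x := by
    rintro x ⟨l, hl, rfl⟩
    obtain ⟨z, hz⟩ := blockPeriod_dvd n hl
    have hpos := blockPeriod_pos hn l
    have hz0 : z ≠ 0 := by rintro rfl; omega
    obtain ⟨y, rfl⟩ := Nat.exists_eq_succ_of_ne_zero hz0
    refine ⟨y, ?_⟩
    have : (2 * (y + 1)) * m = blockPeriod n l := by rw [hz, h2m, Nat.succ_eq_add_one]; ring
    rw [this]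
    refine toepWord_eq a n dvd_rfl fun h => ?_
    have h1 := Nat.le_of_dvd hpos h
    have h2 := two_mul_blockPeriod_le hn l
    omega
  constructor
  · rintro ⟨i, hi, rfl⟩
    have hdm := Nat.div_add_mod' (i - 1) m
    have hlt := Nat.mod_lt (i - 1) hmpos
    set y := (i - 1) / m
    set s := (i - 1) % m
    have hi' : i = y * m + s + 1 := by omega
    refine ⟨s, toepWord a n ((y + 1) * m), toepWord a n ((y + 2) * m), hlt, ?_, ?_⟩
    · obtain ⟨z, hz | hz⟩ := Nat.even_or_odd' y
      · left
        rw [hz]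
        exact ⟨hodd z, heven (z + 1) (by omega)⟩
      · right
        rw [hz]
        exact ⟨heven (z + 1) (by omega), hodd (z + 1)⟩
    · rw [hi']
      exact window_toepWord_eq_holeWord a hn hlt hL
  · rintro ⟨s, c, d, hs, ⟨rfl, hd⟩ | ⟨hc, rfl⟩, rfl⟩
    · obtain ⟨y, rfl⟩ := hreal d hd
      refine ⟨2 * y * m + s + 1, by omega, ?_⟩
      rw [window_toepWord_eq_holeWord a hn hs hL, ← hm, hodd y]; rfl
    · obtain ⟨y, rfl⟩ := hreal c hc
      refine ⟨(2 * y + 1) * m + s + 1, by omega, ?_⟩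
      rw [window_toepWord_eq_holeWord a hn hs hL, ← hm]
      have : 2 * y + 1 + 2 = 2 * (y + 1) + 1 := by ring
      rw [this, hodd (y + 1)]; rfl

/-- Equal factors have offsets congruent modulo `|p (k'-1)| + 1`. By induction on the level `j`: if
the offsets agree modulo `blockPeriod n j` only, then a letter `a (j+1)` of one factor faces
a letter `a j` of the other. -/
theorem offset_modEq {A : Type*} {a : ℕ → A} {n : ℕ → ℕ} (hn : ∀ k, 2 ≤ n k)
    (ha : ∀ k, a k ≠ a (k + 1)) {k' L s s' : ℕ} {c d c' d' : A}
    (hL : blockPeriod n (k' + 1) ≤ L)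
    (h : ∀ t < L, holeWord a n (blockPeriod n (k' + 1)) c d (s + 1 + t) =
      holeWord a n (blockPeriod n (k' + 1)) c' d' (s' + 1 + t)) :
    s ≡ s' [MOD blockPeriod n k'] := by
  have key : ∀ j, j ≤ k' → s ≡ s' [MOD blockPeriod n j] := by
    intro j
    induction j with
    | zero => intro _; simp [blockPeriod, Nat.modEq_one]
    | succ j ih =>
      intro hj
      by_contra hne
      set M := blockPeriod n (j + 1) with hM
      have hMpos : 0 < M := blockPeriod_pos hn _
      have h2M : 2 * M ≤ blockPeriod n (j + 2) := two_mul_blockPeriod_le hn (j + 1)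
      have hle : blockPeriod n (j + 2) ≤ blockPeriod n (k' + 1) :=
        Nat.le_of_dvd (blockPeriod_pos hn _) (blockPeriod_dvd n (by omega))
      have hshift : ∀ r t, s ≡ s' [MOD r] → s + 1 + t ≡ s' + 1 + t [MOD r] :=
        fun r t hr => (hr.add_right 1).add_right t
      -- Among two consecutive multiples of `M` one is not a multiple of the next period.
      obtain ⟨t, ht, h1, h2⟩ : ∃ t < 2 * M, M ∣ s + 1 + t ∧
          ¬ blockPeriod n (j + 2) ∣ s + 1 + t := by
        obtain ⟨t, ht, htd⟩ : ∃ t < M, M ∣ s + 1 + t := by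
          have hlt := Nat.mod_lt s hMpos
          have hdm := Nat.div_add_mod s M
          refine ⟨M - 1 - s % M, by omega, s / M + 1, ?_⟩
          rw [mul_add]; omega
        by_cases hd : blockPeriod n (j + 2) ∣ s + 1 + t
        · refine ⟨t + M, by omega, by rw [← add_assoc]; exact htd.add dvd_rfl, fun h3 => ?_⟩
          rw [← add_assoc] at h3
          have := Nat.le_of_dvd hMpos ((Nat.dvd_add_right hd).1 h3)
          omega
        · exact ⟨t, by omega, htd, hd⟩
      have hf := h t (by omega)
      have h3 : ¬ M ∣ s' + 1 + t := fun h3 => by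
        apply hne
        have : s + 1 + t ≡ s' + 1 + t [MOD M] :=
          ((Nat.modEq_zero_iff_dvd).2 h1).trans ((Nat.modEq_zero_iff_dvd).2 h3).symm
        exact (this.add_right_cancel' t).add_right_cancel' 1
      have h4 : blockPeriod n j ∣ s' + 1 + t :=
        ((hshift _ t (ih (by omega))).dvd_iff dvd_rfl).1 ((blockPeriod_dvd n (by omega)).trans h1)
      unfold holeWord at hf
      rw [if_neg (fun h5 => h2 ((blockPeriod_dvd n (by omega)).trans h5)),
        if_neg (fun h5 => h3 ((blockPeriod_dvd n (by omega)).trans h5)),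
        toepWord_eq a n h1 h2, toepWord_eq a n h4 h3] at hf
      exact ha j hf.symm
  exact key k' le_rfl

/-- If equal factors sit at different offsets, each visible hole faces a letter `a k'`. -/
theorem holes_of_ne {A : Type*} {a : ℕ → A} {n : ℕ → ℕ} (hn : ∀ k, 2 ≤ n k)
    (ha : ∀ k, a k ≠ a (k + 1)) {k' L s s' : ℕ} {c d c' d' : A}
    (hL : blockPeriod n (k' + 1) + 1 ≤ L)
    (hs : s < blockPeriod n (k' + 1)) (hs' : s' < blockPeriod n (k' + 1)) (hne : s ≠ s')
    (h : ∀ t < L, holeWord a n (blockPeriod n (k' + 1)) c d (s + 1 + t) =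
      holeWord a n (blockPeriod n (k' + 1)) c' d' (s' + 1 + t)) :
    c = a k' ∧ (2 * blockPeriod n (k' + 1) ≤ s + L → d = a k') := by
  have hmod := offset_modEq hn ha (by omega) h
  set m := blockPeriod n (k' + 1) with hm
  have face : ∀ t, m ∣ s + 1 + t → holeWord a n m c' d' (s' + 1 + t) = a k' := by
    intro t ht
    have h3 : ¬ m ∣ s' + 1 + t := fun h3 => by
      apply hne
      have : s + 1 + t ≡ s' + 1 + t [MOD m] :=
        ((Nat.modEq_zero_iff_dvd).2 ht).trans ((Nat.modEq_zero_iff_dvd).2 h3).symm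
      exact ((this.add_right_cancel' t).add_right_cancel' 1).eq_of_lt_of_lt hs hs'
    rw [holeWord, if_neg h3]
    refine toepWord_eq a n ?_ h3
    exact (((hmod.add_right 1).add_right t).dvd_iff dvd_rfl).1
      ((blockPeriod_dvd n (by omega)).trans ht)
  constructor
  · have e1 : s + 1 + (m - 1 - s) = m := by omega
    have h1 := h (m - 1 - s) (by omega)
    rw [face _ (by rw [e1]), e1, holeWord, if_pos dvd_rfl, if_pos rfl] at h1
    exact h1
  · intro hv
    have e1 : s + 1 + (2 * m - 1 - s) = 2 * m := by omega
    have h1 := h (2 * m - 1 - s) (by omega)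
    rw [face _ (by rw [e1]; exact Dvd.intro_left _ rfl), e1, holeWord,
      if_pos (Dvd.intro_left _ rfl), if_neg (by omega)] at h1
    exact h1

/-- Holes beyond the end of the factor do not matter. -/
theorem window_holeWord_of_lt {A : Type*} (a : ℕ → A) (n : ℕ → ℕ) {m s L : ℕ} (c d d' : A)
    (hv : s + L < 2 * m) :
    window (holeWord a n m c d) (s + 1) L = window (holeWord a n m c d') (s + 1) L := by
  rw [window_eq_iff]
  intro t ht
  unfold holeWord
  split_ifs with h1 h2
  · rfl
  · exfalso
    obtain ⟨z, hz⟩ := h1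
    have h3 : z ≠ 0 := by rintro rfl; omega
    have h4 : z ≠ 1 := by rintro rfl; omega
    have := Nat.mul_le_mul_left m (show 2 ≤ z by omega)
    omega
  · rfl

/-- The word `p k' (a k') p k' (a k') ⋯` has period `|p (k'-1)| + 1`. -/
theorem window_holeWord_mod {A : Type*} (a : ℕ → A) {n : ℕ → ℕ} (hn : ∀ k, 2 ≤ n k)
    {k' s L : ℕ} :
    window (holeWord a n (blockPeriod n (k' + 1)) (a k') (a k')) (s + 1) L =
      window (holeWord a n (blockPeriod n (k' + 1)) (a k') (a k')) (s % blockPeriod n k' + 1) L := by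
  have key : ∀ i, ¬ blockPeriod n k' ∣ i →
      holeWord a n (blockPeriod n (k' + 1)) (a k') (a k') i = toepWord a n i := fun i hi => by
    rw [holeWord, if_neg fun h => hi ((blockPeriod_dvd n (by omega)).trans h)]
  have key2 : ∀ i, blockPeriod n k' ∣ i →
      holeWord a n (blockPeriod n (k' + 1)) (a k') (a k') i = a k' := fun i hi => by
    unfold holeWord
    split_ifs with h
    · rfl
    · rfl
    · exact toepWord_eq a n hi h
  rw [window_eq_iff]
  intro t ht
  have hmod : s + 1 + t ≡ s % blockPeriod n k' + 1 + t [MOD blockPeriod n k'] :=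
    ((Nat.mod_modEq s _).symm.add_right 1).add_right t
  by_cases hd : blockPeriod n k' ∣ s + 1 + t
  · rw [key2 _ hd, key2 _ ((hmod.dvd_iff dvd_rfl).1 hd)]
  · rw [key _ hd, key _ fun h => hd ((hmod.dvd_iff dvd_rfl).2 h)]
    exact toepWord_congr a hn hd hmod

theorem Ak_succ {A : Type*} (a : ℕ → A) (k : ℕ) : Ak a k = insert (a k) (Ak a (k + 1)) := by
  ext x
  simp only [Ak, Set.mem_ofPred_eq, Set.mem_insert_iff]
  constructor
  · rintro ⟨j, hj, rfl⟩
    rcases hj.eq_or_lt with rfl | h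
    · exact Or.inl rfl
    · exact Or.inr ⟨j, h, rfl⟩
  · rintro (rfl | ⟨j, hj, rfl⟩)
    · exact ⟨k, le_rfl, rfl⟩
    · exact ⟨j, by omega, rfl⟩

/-! ### Counting -/

open Classical in
/-- A system of representatives `(s, c, d)` for the factors of length `L`: offset and hole letters.
Offsets `s < 2 m - L` see one hole only (`d = c` is then a dummy), and for `c = a k'` only the first
`e` of these give new factors. The intended values are `m = blockPeriod n (k'+1)` and
`e = blockPeriod n k'`. -/
noncomputable def repTriples {A : Type*} [Fintype A] (a : ℕ → A) (k' e m L : ℕ) :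
    Finset (ℕ × A × A) :=
  (Finset.range (2 * m - L) ×ˢ
      (((Ak a (k' + 1)).toFinset.erase (a k')).image fun c => (c, c))) ∪
    (Finset.range (min (2 * m - L) e) ×ˢ
      (if a k' ∈ Ak a (k' + 1) then {(a k', a k')} else ∅)) ∪
    (Finset.Ico (2 * m - L) m ×ˢ
      (({a (k' + 1)} ×ˢ (Ak a (k' + 2)).toFinset) ∪ ((Ak a (k' + 2)).toFinset ×ˢ {a (k' + 1)})))

theorem mem_repTriples {A : Type*} [Fintype A] (a : ℕ → A) (k' e m L s : ℕ) (c d : A) :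
    (s, c, d) ∈ repTriples a k' e m L ↔
      (s < 2 * m - L ∧ c ∈ Ak a (k' + 1) ∧ d = c ∧ (c = a k' → s < e)) ∨
      (2 * m - L ≤ s ∧ s < m ∧ HolePair a k' c d) := by
  classical
  by_cases h : a k' ∈ Ak a (k' + 1)
  · simp only [repTriples, HolePair, h, if_true, Finset.mem_union, Finset.mem_product,
      Finset.mem_range, Finset.mem_image, Finset.mem_erase, Set.mem_toFinset, Finset.mem_Ico,
      Finset.mem_singleton, Prod.mk.injEq, lt_min_iff]
    grind
  · simp only [repTriples, HolePair, h, if_false, Finset.mem_union, Finset.mem_product,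
      Finset.mem_range, Finset.mem_image, Finset.mem_erase, Set.mem_toFinset, Finset.mem_Ico,
      Finset.mem_singleton, Prod.mk.injEq, Finset.notMem_empty]
    grind

open Classical in
theorem card_repTriples {A : Type*} [Fintype A] (a : ℕ → A)
    {k' e m L : ℕ} (hL1 : m + 1 ≤ L) (hL2 : L ≤ 2 * m) :
    ((repTriples a k' e m L).card : ℤ) =
      (((Ak a (k' + 2)).ncard : ℤ) - 1) * (L : ℤ)
        + (((Ak a k').ncard : ℤ) - ((Ak a (k' + 2)).ncard : ℤ)) * m
        + (if a k' ∈ Ak a (k' + 1) then 1 else 0) *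
            (if L + e ≤ 2 * m then (L : ℤ) - m + e else m) := by
  set P := (Ak a (k' + 2)).toFinset with hP
  set Q := (Ak a (k' + 1)).toFinset with hQ
  have hQP : Q = insert (a (k' + 1)) P := by
    ext x; simp [hQ, hP, Ak_succ a (k' + 1)]
  have c2 : (Ak a (k' + 2)).ncard = P.card := Set.ncard_eq_toFinset_card' _
  have c1 : (Ak a (k' + 1)).ncard = Q.card := Set.ncard_eq_toFinset_card' _
  have c0 : ((Ak a k').ncard : ℤ) = Q.card + (if a k' ∈ Ak a (k' + 1) then 0 else 1) := by
    rw [Ak_succ a k', ← c1]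
    split_ifs with h
    · rw [Set.insert_eq_of_mem h]; simp
    · rw [Set.ncard_insert_of_notMem h]; simp
  -- Only `(a (k'+1), a (k'+1))` can be counted twice among the hole pairs.
  have cpairs : (({a (k' + 1)} ×ˢ P ∪ P ×ˢ {a (k' + 1)} : Finset (A × A)).card : ℤ) =
      Q.card + P.card - 1 := by
    have h1 := Finset.card_union_add_card_inter
      ({a (k' + 1)} ×ˢ P : Finset (A × A)) (P ×ˢ {a (k' + 1)})
    rw [Finset.card_product, Finset.card_product, Finset.card_singleton] at h1
    by_cases h : a (k' + 1) ∈ P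
    · have h2 : ({a (k' + 1)} ×ˢ P ∩ P ×ˢ {a (k' + 1)} : Finset (A × A)) =
          {(a (k' + 1), a (k' + 1))} := by
        ext ⟨x, y⟩
        simp only [Finset.mem_inter, Finset.mem_product, Finset.mem_singleton, Prod.mk.injEq]
        grind
      rw [h2, Finset.card_singleton] at h1
      rw [hQP, Finset.insert_eq_of_mem h]
      omega
    · have h2 : ({a (k' + 1)} ×ˢ P ∩ P ×ˢ {a (k' + 1)} : Finset (A × A)) = ∅ := by
        ext ⟨x, y⟩
        simp only [Finset.mem_inter, Finset.mem_product, Finset.mem_singleton, Finset.notMem_empty]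
        grind
      rw [h2, Finset.card_empty] at h1
      rw [hQP, Finset.card_insert_of_notMem h]
      omega
  have hdisj1 : Disjoint (Finset.range (2 * m - L) ×ˢ ((Q.erase (a k')).image fun c => (c, c)))
      (Finset.range (min (2 * m - L) e) ×ˢ
        (if a k' ∈ Ak a (k' + 1) then {(a k', a k')} else ∅)) := by
    rw [Finset.disjoint_left]
    rintro ⟨s, c, d⟩ h1 h2
    split_ifs at h2 <;>
    simp only [Finset.mem_product, Finset.mem_image, Finset.mem_erase, Finset.mem_singleton,
      Prod.mk.injEq, Finset.notMem_empty] at h1 h2 <;> grind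
  have hdisj2 : Disjoint (Finset.range (2 * m - L) ×ˢ ((Q.erase (a k')).image fun c => (c, c)) ∪
      Finset.range (min (2 * m - L) e) ×ˢ
        (if a k' ∈ Ak a (k' + 1) then {(a k', a k')} else ∅))
      (Finset.Ico (2 * m - L) m ×ˢ ({a (k' + 1)} ×ˢ P ∪ P ×ˢ {a (k' + 1)})) := by
    rw [Finset.disjoint_left]
    rintro ⟨s, c, d⟩ h1 h2
    simp only [Finset.mem_union, Finset.mem_product, Finset.mem_range, Finset.mem_Ico,
      lt_min_iff] at h1 h2
    omega
  have e1 : ((2 * m - L : ℕ) : ℤ) = 2 * m - L := by omega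
  have e2 : ((m - (2 * m - L) : ℕ) : ℤ) = L - m := by omega
  rw [repTriples, Finset.card_union_of_disjoint hdisj2, Finset.card_union_of_disjoint hdisj1,
    Finset.card_product, Finset.card_product, Finset.card_product,
    Finset.card_image_of_injective _ (fun x y h => (Prod.mk.inj h).1), Finset.card_range,
    Finset.card_range, Nat.card_Ico]
  push_cast [-Nat.cast_sub]
  rw [cpairs, e1, e2, c0, c2]
  by_cases h : a k' ∈ Ak a (k' + 1)
  · have h' : a k' ∈ Q := by simpa [hQ] using h
    have hc := Finset.card_erase_add_one h'
    have hc' : ((Q.erase (a k')).card : ℤ) = Q.card - 1 := by omega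
    rw [hc']
    simp only [h, if_true, Finset.card_singleton]
    split_ifs with hle
    · rw [min_eq_right (by omega)]; push_cast; ring
    · rw [min_eq_left (by omega)]; push_cast; ring
  · have h' : a k' ∉ Q := by simpa [hQ] using h
    rw [Finset.erase_eq_of_notMem h']
    simp only [h, if_false, Finset.card_empty]
    push_cast; ring

theorem cmpl_eq_card {A : Type*} [Fintype A] (a : ℕ → A) {n : ℕ → ℕ} (hn : ∀ k, 2 ≤ n k)
    (ha : ∀ k, a k ≠ a (k + 1)) {k' L : ℕ} (hnk : n (k' + 1) = 2)
    (hL1 : blockPeriod n (k' + 1) + 1 ≤ L) (hL2 : L ≤ 2 * blockPeriod n (k' + 1)) :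
    cmpl a n L = (repTriples a k' (blockPeriod n k') (blockPeriod n (k' + 1)) L).card := by
  have hepos : 0 < blockPeriod n k' := blockPeriod_pos hn _
  have hpair : ∀ c d, HolePair a k' c d → c ∈ Ak a (k' + 1) := by
    rintro c d (⟨rfl, -⟩ | ⟨h, -⟩)
    · exact ⟨_, le_rfl, rfl⟩
    · rw [Ak_succ]; exact Or.inr h
  have hpair' : ∀ c ∈ Ak a (k' + 1), ∃ d, HolePair a k' c d := by
    intro c hc
    rw [Ak_succ] at hc
    rcases hc with rfl | hc
    · exact ⟨a (k' + 2), Or.inl ⟨rfl, _, le_rfl, rfl⟩⟩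
    · exact ⟨a (k' + 1), Or.inr ⟨hc, rfl⟩⟩
  set e := blockPeriod n k' with he
  set m := blockPeriod n (k' + 1) with hm
  let F : ℕ × A × A → List A := fun x => window (holeWord a n m x.2.1 x.2.2) (x.1 + 1) L
  have himg : {u | u ∈ ToeplitzLang a n ∧ u.length = L} = Set.image F (repTriples a k' e m L) := by
    ext u
    rw [Set.mem_ofPred_eq, window_lang_iff a hn hnk hL2]
    constructor
    · rintro ⟨s, c, d, hs, hp, rfl⟩
      by_cases hv : s < 2 * m - L
      · have hw := window_holeWord_of_lt a n c d c (show s + L < 2 * m by omega)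
        rw [← hm, hw]
        by_cases hc : c = a k'
        · subst hc
          have hle := Nat.mod_le s e
          refine ⟨(s % e, a k', a k'), ?_, (window_holeWord_mod a hn).symm⟩
          rw [Finset.mem_coe, mem_repTriples]
          exact Or.inl ⟨by omega, hpair _ _ hp, rfl, fun _ => Nat.mod_lt _ hepos⟩
        · refine ⟨(s, c, c), ?_, rfl⟩
          rw [Finset.mem_coe, mem_repTriples]
          exact Or.inl ⟨hv, hpair _ _ hp, rfl, fun h => absurd h hc⟩
      · refine ⟨(s, c, d), ?_, rfl⟩
        rw [Finset.mem_coe, mem_repTriples]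
        exact Or.inr ⟨by omega, hs, hp⟩
    · rintro ⟨⟨s, c, d⟩, hx, rfl⟩
      rw [Finset.mem_coe, mem_repTriples] at hx
      rcases hx with ⟨hs, hc, rfl, -⟩ | ⟨-, hs, hp⟩
      · obtain ⟨d', hd'⟩ := hpair' _ hc
        exact ⟨s, d, d', by omega, hd', window_holeWord_of_lt a n _ _ _ (by omega)⟩
      · exact ⟨s, c, d, hs, hp, rfl⟩
  have hinj : Set.InjOn F (repTriples a k' e m L : Set _) := by
    rintro ⟨s, c, d⟩ hx ⟨s', c', d'⟩ hx' hF
    rw [Finset.mem_coe, mem_repTriples] at hx hx'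
    have h := window_eq_iff.1 hF
    simp only at h
    have hs : s < m := by rcases hx with h | h <;> omega
    have hs' : s' < m := by rcases hx' with h | h <;> omega
    by_cases hne : s = s'
    · subst hne
      have h1 := h (m - 1 - s) (by omega)
      rw [show s + 1 + (m - 1 - s) = m by omega] at h1
      simp only [holeWord, dvd_refl, if_true] at h1
      subst h1
      rcases hx with ⟨hv, -, rfl, -⟩ | ⟨hv, -, -⟩
      · rcases hx' with ⟨-, -, rfl, -⟩ | ⟨hv', -, -⟩
        · rfl
        · omega
      · have h2 := h (2 * m - 1 - s) (by omega)
        rw [show s + 1 + (2 * m - 1 - s) = 2 * m by omega] at h2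
        rw [holeWord, holeWord, if_pos (Dvd.intro_left _ rfl), if_neg (by omega),
          if_pos (Dvd.intro_left _ rfl), if_neg (by omega)] at h2
        rw [h2]
    · exfalso
      obtain ⟨hc, hd⟩ := holes_of_ne hn ha hL1 hs hs' hne h
      obtain ⟨hc', hd'⟩ := holes_of_ne hn ha hL1 hs' hs (Ne.symm hne) fun t ht => (h t ht).symm
      -- Two visible holes cannot both carry `a k'`, one of them being `a (k'+1)`.
      have hone : ∀ {σ : ℕ} {x y : A}, 2 * m - L ≤ σ → HolePair a k' x y → x = a k' →
          (2 * m ≤ σ + L → y = a k') → False := by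
        rintro σ x y hv (⟨h1, -⟩ | ⟨-, h1⟩) hx hy
        · exact ha k' (hx.symm.trans h1)
        · exact ha k' ((hy (by omega)).symm.trans h1)
      rcases hx with ⟨-, -, -, hlt⟩ | ⟨hv, -, hp⟩
      · rcases hx' with ⟨-, -, -, hlt'⟩ | ⟨hv', -, hp'⟩
        · exact hne ((offset_modEq hn ha (by omega) h).eq_of_lt_of_lt (hlt hc) (hlt' hc'))
        · exact hone hv' hp' hc' hd'
      · exact hone hv hp hc hd
  rw [cmpl, himg, hinj.ncard_image, Set.ncard_coe_finset]

/- STATEMENT 8: the complexity function for `k ≥ 1` with `n k = 2` on the range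
`|p (k-1)| + 2 ≤ L ≤ |p k| + 1`. -/
open Classical in
theorem stmt8 {A : Type*} [Fintype A] [Nonempty A]
    (a : ℕ → A) (n : ℕ → ℕ) (hn : ∀ k, 2 ≤ n k) (ha : ∀ k, a k ≠ a (k + 1))
    (hAev : 2 ≤ (Aev a).ncard)
    (k : ℕ) (hk : 1 ≤ k) (hnk : n k = 2) (L : ℕ)
    (hL1 : lenPrev a n k + 2 ≤ L) (hL2 : L ≤ (ToeplitzBlock a n k).length + 1) :
    (cmpl a n L : ℤ) =
      (((Ak a (k + 1)).ncard : ℤ) - 1) * (L : ℤ)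
        + (((Ak a (k - 1)).ncard : ℤ) - ((Ak a (k + 1)).ncard : ℤ)) *
            ((lenPrev a n k : ℤ) + 1)
        + (if a (k - 1) ∈ Ak a k then 1 else 0) *
            (if L + lenPrev a n (k - 1) ≤ (ToeplitzBlock a n k).length then
              (L : ℤ) - (lenPrev a n k : ℤ) + (lenPrev a n (k - 1) : ℤ)
            else (lenPrev a n k : ℤ) + 1) := by
  obtain ⟨k', rfl⟩ := Nat.exists_eq_add_of_le' hk
  have hm := lenPrev_add_one a hn (k' + 1)
  have he := lenPrev_add_one a hn k'
  have h2m := toeplitzBlock_length a hn (k' + 1)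
  rw [blockPeriod_succ, hnk] at h2m
  have hLm1 : blockPeriod n (k' + 1) + 1 ≤ L := by omega
  have hLm2 : L ≤ 2 * blockPeriod n (k' + 1) := by omega
  rw [cmpl_eq_card a hn ha hnk hLm1 hLm2, card_repTriples a hLm1 hLm2, Nat.add_sub_cancel,
    ← hm, ← he]
  have hiff : L + (lenPrev a n k' + 1) ≤ 2 * (lenPrev a n (k' + 1) + 1) ↔
      L + lenPrev a n k' ≤ (ToeplitzBlock a n (k' + 1)).length := by omega
  simp only [hiff]
  push_cast
  congr 2
  split_ifs <;> ring
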